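/- arXiv:1109.5202 — 2 statements merged into one kernel-verified Lean document; each statement's English description precedes it below -/
import Mathlib

section
/- Fix a partition μ = (μ₁,…,μᵣ) of n with r parts. For every tuple (ν¹,…,νʳ) with νᵖ a partition of μ_p for each p, one has μ₁·‖Σ_p νᵖ‖² − n·Σ_p ‖νᵖ‖² ≤ μ₁·n² − n·‖μ‖². Equality holds if and only if either (i) μ is rectangular and all the partitions νᵖ are equal, or (ii) νᵖ = (μ_p) (the one-part partition) for each p = 1,…,r. -/
/-- A partition of `n`: a weakly decreasing, eventually zero sequence of natural
numbers (0-indexed: `parts i` is `λ_{i+1}`) summing to `n`. -/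
structure PartitionOf (n : ℕ) where
  parts : ℕ → ℕ
  antitone : ∀ ⦃i j : ℕ⦄, i ≤ j → parts j ≤ parts i
  eventually_zero : ∃ N, ∀ i, N ≤ i → parts i = 0
  sum_eq : ∑ᶠ i, parts i = n

/-- A partition is rectangular if all its (non-zero) parts are equal. -/
def Rectangular {n : ℕ} (lam : PartitionOf n) : Prop :=
  ∀ i j, lam.parts i ≠ 0 → lam.parts j ≠ 0 → lam.parts i = lam.parts j

/-- The length (number of non-zero parts) of a partition. -/
noncomputable def partLength {n : ℕ} (lam : PartitionOf n) : ℕ :=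
  Set.ncard {i | lam.parts i ≠ 0}

open Finset in
/-- nonnegative sequences -/
lemma aux_cross (N : ℕ) (x y : ℕ → ℤ) (hx : ∀ i, 0 ≤ x i) (hy : ∀ i, 0 ≤ y i) :
    ∑ i ∈ range N, x i * y i ≤ (∑ i ∈ range N, x i) * ∑ i ∈ range N, y i := by
  rw [Finset.sum_mul]
  refine Finset.sum_le_sum fun i hi => ?_
  exact mul_le_mul_of_nonneg_left (Finset.single_le_sum (fun j _ => hy j) hi) (hx i)

/-- The defect of a pair. -/
def auxD (N : ℕ) (m a b : ℤ) (x y : ℕ → ℤ) : ℤ :=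
  2 * m * (a * b - ∑ i ∈ Finset.range N, x i * y i)
    - b * (a * a - ∑ i ∈ Finset.range N, x i * x i)
    - a * (b * b - ∑ i ∈ Finset.range N, y i * y i)

lemma auxD_symm (N : ℕ) (m a b : ℤ) (x y : ℕ → ℤ) : auxD N m a b x y = auxD N m b a y x := by
  have : ∑ i ∈ Finset.range N, x i * y i = ∑ i ∈ Finset.range N, y i * x i :=
    Finset.sum_congr rfl fun i _ => mul_comm _ _
  unfold auxD
  rw [this]; ring

lemma auxD_id (N : ℕ) (m a b : ℤ) (x y : ℕ → ℤ) :
    b * auxD N m a b x y = 2 * b * (m - a) * (a * b - ∑ i ∈ Finset.range N, x i * y i)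
      + ∑ i ∈ Finset.range N, (b * x i - a * y i) ^ 2
      + a * (a - b) * (b * b - ∑ i ∈ Finset.range N, y i * y i) := by
  have : ∑ i ∈ Finset.range N, (b * x i - a * y i) ^ 2
      = b ^ 2 * ∑ i ∈ Finset.range N, x i * x i - 2 * a * b * ∑ i ∈ Finset.range N, x i * y i
        + a ^ 2 * ∑ i ∈ Finset.range N, y i * y i := by
    simp only [Finset.mul_sum, ← Finset.sum_sub_distrib, ← Finset.sum_add_distrib]
    exact Finset.sum_congr rfl fun i _ => by ring
  rw [this]; unfold auxD; ring

lemma auxD_terms (N : ℕ) (m a b : ℤ) (x y : ℕ → ℤ) (hb : 0 < b) (hab : b ≤ a) (ham : a ≤ m)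
    (hx : ∀ i, 0 ≤ x i) (hy : ∀ i, 0 ≤ y i) (hxa : ∑ i ∈ Finset.range N, x i = a)
    (hyb : ∑ i ∈ Finset.range N, y i = b) :
    0 ≤ auxD N m a b x y ∧ (auxD N m a b x y = 0 →
      (∀ i ∈ Finset.range N, b * x i = a * y i) ∧
      (a = b ∨ b * b = ∑ i ∈ Finset.range N, y i * y i)) := by
  have h := auxD_id N m a b x y
  have h1 : 0 ≤ 2 * b * (m - a) * (a * b - ∑ i ∈ Finset.range N, x i * y i) := by
    have := aux_cross N x y hx hy
    rw [hxa, hyb] at this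
    have h2 : 0 ≤ a * b - ∑ i ∈ Finset.range N, x i * y i := by linarith
    have h3 : 0 ≤ m - a := by linarith
    positivity
  have h2 : 0 ≤ ∑ i ∈ Finset.range N, (b * x i - a * y i) ^ 2 :=
    Finset.sum_nonneg fun i _ => sq_nonneg _
  have h3 : 0 ≤ a * (a - b) * (b * b - ∑ i ∈ Finset.range N, y i * y i) := by
    have := aux_cross N y y hy hy
    rw [hyb] at this
    have h2 : 0 ≤ b * b - ∑ i ∈ Finset.range N, y i * y i := by linarith
    have h3 : 0 ≤ a - b := by linarith
    have h4 : 0 ≤ a := by linarith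
    positivity
  refine ⟨?_, fun h0 => ⟨?_, ?_⟩⟩
  · refine nonneg_of_mul_nonneg_right (a := b) ?_ hb
    rw [h]; linarith
  · rw [h0, mul_zero] at h
    have h4 : ∑ i ∈ Finset.range N, (b * x i - a * y i) ^ 2 = 0 := by linarith
    rw [Finset.sum_eq_zero_iff_of_nonneg (fun i _ => sq_nonneg _)] at h4
    intro i hi
    have := pow_eq_zero_iff (two_ne_zero) |>.1 (h4 i hi)
    linarith
  · rw [h0, mul_zero] at h
    have h4 : a * (a - b) * (b * b - ∑ i ∈ Finset.range N, y i * y i) = 0 := by linarith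
    rcases mul_eq_zero.1 h4 with h5 | h5
    · rcases mul_eq_zero.1 h5 with h6 | h6
      · linarith
      · left; linarith
    · right; linarith

lemma aux_sum (r N : ℕ) (m : ℤ) (a : Fin r → ℤ) (x : Fin r → ℕ → ℤ) :
    ∑ p, ∑ q, auxD N m (a p) (a q) (x p) (x q) =
      2 * ((m * (∑ p, a p) ^ 2 - (∑ p, a p) * ∑ p, a p ^ 2) -
        (m * (∑ i ∈ Finset.range N, (∑ p, x p i) ^ 2)
          - (∑ p, a p) * ∑ p, ∑ i ∈ Finset.range N, x p i ^ 2)) := by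
  have e1 : (∑ p, a p) ^ 2 = ∑ p, ∑ q, a p * a q := by
    rw [sq, Finset.sum_mul_sum]
  have e2 : ∑ i ∈ Finset.range N, (∑ p, x p i) ^ 2
      = ∑ p, ∑ q, ∑ i ∈ Finset.range N, x p i * x q i := by
    simp only [sq, Finset.sum_mul_sum]
    rw [Finset.sum_comm]
    exact Finset.sum_congr rfl fun p _ => Finset.sum_comm
  have e3 : ∀ g : Fin r → ℤ, (∑ p, a p) * ∑ p, g p = ∑ p, ∑ q, a p * g q := by
    intro g; rw [Finset.sum_mul_sum]
  have e4 : ∀ g : Fin r → ℤ, (∑ p, a p) * ∑ p, g p = ∑ p, ∑ q, a q * g p := by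
    intro g; rw [e3, Finset.sum_comm]
  have e5 : 2 * ((m * (∑ p, a p) ^ 2 - (∑ p, a p) * ∑ p, a p ^ 2) -
        (m * (∑ i ∈ Finset.range N, (∑ p, x p i) ^ 2)
          - (∑ p, a p) * ∑ p, ∑ i ∈ Finset.range N, x p i ^ 2)) =
      2 * m * (∑ p, a p) ^ 2 - 2 * m * (∑ i ∈ Finset.range N, (∑ p, x p i) ^ 2)
      - (∑ p, a p) * ∑ p, (a p ^ 2 - ∑ i ∈ Finset.range N, x p i ^ 2)
      - (∑ p, a p) * ∑ p, (a p ^ 2 - ∑ i ∈ Finset.range N, x p i ^ 2) := by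
    rw [Finset.sum_sub_distrib]; ring
  rw [e5, e1, e2]
  nth_rewrite 1 [e3]
  rw [e4]
  simp only [Finset.mul_sum, ← Finset.sum_sub_distrib]
  refine Finset.sum_congr rfl fun p _ => Finset.sum_congr rfl fun q _ => ?_
  unfold auxD
  simp only [mul_sub, Finset.mul_sum, sq]
  ring

lemma aux_parts {n r : ℕ} (μ : PartitionOf n) (hr : partLength μ = r) (i : ℕ) :
    μ.parts i ≠ 0 ↔ i < r := by
  have hex : ∃ k, μ.parts k = 0 := by
    obtain ⟨N, hN⟩ := μ.eventually_zero
    exact ⟨N, hN N le_rfl⟩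
  classical
  have key : ∀ i, μ.parts i ≠ 0 ↔ i < Nat.find hex := by
    intro i
    constructor
    · intro h
      by_contra hc
      have := μ.antitone (not_lt.1 hc)
      have h2 := Nat.find_spec hex
      omega
    · intro h
      exact Nat.find_min hex h
  have : {i | μ.parts i ≠ 0} = Set.Iio (Nat.find hex) := by
    ext i; simpa using key i
  rw [partLength, this] at hr
  have h2 : (Set.Iio (Nat.find hex)).ncard = Nat.find hex := by
    rw [← Finset.coe_Iio, Set.ncard_coe_finset]; simp
  rw [key, ← hr, h2]

lemma aux_finsum {M : Type*} [AddCommMonoid M] (f : ℕ → M) (N : ℕ) (h : ∀ i, N ≤ i → f i = 0) :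
    ∑ᶠ i, f i = ∑ i ∈ Finset.range N, f i := by
  refine finsum_eq_sum_of_support_subset _ ?_
  intro i hi
  simp only [Finset.coe_range, Set.mem_Iio]
  by_contra hc
  exact hi (h i (not_lt.1 hc))

/-- Fix a partition `μ` of `n` with `r` parts.  For partitions `νᵖ` of `μ_p`
(`p = 1,…,r`) we have
`μ₁·‖Σ_p νᵖ‖² − n·Σ_p ‖νᵖ‖² ≤ μ₁·n² − n·‖μ‖²`, with equality iff either
(i) `μ` is rectangular and all the `νᵖ` are equal, or (ii) `νᵖ = (μ_p)` for all `p`. -/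
theorem stmt_4 (n r : ℕ) (μ : PartitionOf n) (hr : partLength μ = r)
    (ν : ∀ p : Fin r, PartitionOf (μ.parts p)) :
    (μ.parts 0 : ℤ) * (∑ᶠ i, ((∑ p, (ν p).parts i : ℕ) : ℤ) ^ 2)
        - (n : ℤ) * ∑ p, ∑ᶠ i, ((ν p).parts i : ℤ) ^ 2
      ≤ (μ.parts 0 : ℤ) * (n : ℤ) ^ 2 - (n : ℤ) * ∑ᶠ i, (μ.parts i : ℤ) ^ 2 ∧
    ((μ.parts 0 : ℤ) * (∑ᶠ i, ((∑ p, (ν p).parts i : ℕ) : ℤ) ^ 2)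
        - (n : ℤ) * ∑ p, ∑ᶠ i, ((ν p).parts i : ℤ) ^ 2
      = (μ.parts 0 : ℤ) * (n : ℤ) ^ 2 - (n : ℤ) * ∑ᶠ i, (μ.parts i : ℤ) ^ 2 ↔
      (Rectangular μ ∧ ∀ p q : Fin r, (ν p).parts = (ν q).parts) ∨
      (∀ p : Fin r, (ν p).parts 0 = μ.parts p ∧ ∀ i, i ≠ 0 → (ν p).parts i = 0)) := by
  have hpos := aux_parts μ hr
  have hz : ∀ i, r ≤ i → μ.parts i = 0 := by
    intro i hi
    by_contra hc
    have := (hpos i).1 hc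
    omega
  have hn : (n : ℤ) = ∑ p : Fin r, (μ.parts p : ℤ) := by
    have := μ.sum_eq
    rw [aux_finsum _ r hz, Finset.sum_range] at this
    exact_mod_cast this.symm
  have hμ2 : ∑ᶠ i, (μ.parts i : ℤ) ^ 2 = ∑ p : Fin r, (μ.parts p : ℤ) ^ 2 := by
    rw [aux_finsum _ r (fun i hi => by simp [hz i hi]), Finset.sum_range]
  obtain ⟨N, hN⟩ : ∃ N, ∀ p : Fin r, ∀ i, N ≤ i → (ν p).parts i = 0 := by
    choose f hf using fun p => (ν p).eventually_zero
    refine ⟨∑ p, f p, fun p i hi => hf p i (le_trans ?_ hi)⟩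
    exact Finset.single_le_sum (f := f) (fun _ _ => Nat.zero_le _) (Finset.mem_univ p)
  have hν1 : ∀ p : Fin r, ∑ i ∈ Finset.range N, ((ν p).parts i : ℤ) = μ.parts p := by
    intro p
    have := (ν p).sum_eq
    rw [aux_finsum _ N (hN p)] at this
    exact_mod_cast this
  have hν2 : ∀ p : Fin r, ∑ᶠ i, ((ν p).parts i : ℤ) ^ 2
      = ∑ i ∈ Finset.range N, ((ν p).parts i : ℤ) ^ 2 := by
    intro p
    exact aux_finsum _ N (fun i hi => by simp [hN p i hi])
  have hs : ∑ᶠ i, ((∑ p, (ν p).parts i : ℕ) : ℤ) ^ 2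
      = ∑ i ∈ Finset.range N, (∑ p, ((ν p).parts i : ℤ)) ^ 2 := by
    rw [aux_finsum _ N (fun i hi => by simp [fun p => hN p i hi])]
    push_cast
    rfl
  rw [hs, hμ2, hn]
  simp only [hν2]
  have hsum := aux_sum r N (μ.parts 0 : ℤ) (fun p => (μ.parts p : ℤ))
    (fun p i => ((ν p).parts i : ℤ))
  set D : Fin r → Fin r → ℤ := fun p q => auxD N (μ.parts 0 : ℤ) (μ.parts p) (μ.parts q)
    (fun i => ((ν p).parts i : ℤ)) (fun i => ((ν q).parts i : ℤ)) with hD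
  have hap : ∀ p : Fin r, (0 : ℤ) < μ.parts p := fun p => by
    have := (hpos p).2 p.2
    omega
  have hterms := fun (p q : Fin r) (h : (μ.parts q : ℤ) ≤ μ.parts p) =>
    auxD_terms N (μ.parts 0 : ℤ) (μ.parts p) (μ.parts q)
    (fun i => ((ν p).parts i : ℤ)) (fun i => ((ν q).parts i : ℤ)) (hap q) h
    (by exact_mod_cast μ.antitone (Nat.zero_le _)) (fun i => by positivity)
    (fun i => by positivity) (hν1 p) (hν1 q)
  have hD0 : ∀ p q, 0 ≤ D p q := by
    intro p q
    rcases le_total (μ.parts q : ℤ) (μ.parts p) with h | h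
    · exact (hterms p q h).1
    · simp only [hD]
      rw [auxD_symm]
      exact (hterms q p h).1
  change ∑ p, ∑ q, D p q = _ at hsum
  have hS : 0 ≤ ∑ p, ∑ q, D p q :=
    Finset.sum_nonneg fun p _ => Finset.sum_nonneg fun q _ => hD0 p q
  refine ⟨by linarith, ?_, ?_⟩
  · intro heq
    have hS0 : ∑ p, ∑ q, D p q = 0 := by rw [hsum]; linarith
    have hDz : ∀ p q, D p q = 0 := by
      intro p q
      rw [Finset.sum_eq_zero_iff_of_nonneg
        (fun p _ => Finset.sum_nonneg fun q _ => hD0 p q)] at hS0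
      have := hS0 p (Finset.mem_univ p)
      rw [Finset.sum_eq_zero_iff_of_nonneg (fun q _ => hD0 p q)] at this
      exact this q (Finset.mem_univ q)
    have hprop : ∀ p q : Fin r, ∀ i, μ.parts q * (ν p).parts i = μ.parts p * (ν q).parts i := by
      intro p q i
      by_cases hi : i < N
      · rcases le_total (μ.parts q : ℤ) (μ.parts p) with h | h
        · have := ((hterms p q h).2 (hDz p q)).1 i (Finset.mem_range.2 hi)
          exact_mod_cast this
        · have := ((hterms q p h).2 (hDz q p)).1 i (Finset.mem_range.2 hi)
          exact_mod_cast this.symm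
      · rw [hN p i (not_lt.1 hi), hN q i (not_lt.1 hi)]; simp
    by_cases hall : ∀ p q : Fin r, μ.parts p = μ.parts q
    · left
      refine ⟨fun i j hi hj => hall ⟨i, (hpos i).1 hi⟩ ⟨j, (hpos j).1 hj⟩, fun p q => ?_⟩
      funext i
      have := hprop p q i
      exact Nat.eq_of_mul_eq_mul_left (by exact_mod_cast hap q)
        (this.trans (congrArg (· * (ν q).parts i) (hall p q)))
    · right
      obtain ⟨p, q, hpq⟩ : ∃ p q : Fin r, μ.parts q < μ.parts p := by
        push Not at hall
        obtain ⟨p, q, h⟩ := hall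
        rcases lt_or_gt_of_ne h with h | h
        · exact ⟨q, p, h⟩
        · exact ⟨p, q, h⟩
      have hsq : (μ.parts q : ℤ) * μ.parts q
          = ∑ i ∈ Finset.range N, ((ν q).parts i : ℤ) * (ν q).parts i := by
        rcases ((hterms p q (by exact_mod_cast hpq.le)).2 (hDz p q)).2 with h | h
        · exfalso
          have : μ.parts p = μ.parts q := by exact_mod_cast h
          omega
        · exact h
      have hle : ∑ i ∈ Finset.range N, ((ν q).parts i : ℤ) * (ν q).parts i
          ≤ (ν q).parts 0 * μ.parts q := by
        rw [← hν1 q, Finset.mul_sum]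
        refine Finset.sum_le_sum fun i _ => ?_
        refine mul_le_mul_of_nonneg_right ?_ (by positivity)
        exact_mod_cast (ν q).antitone (Nat.zero_le i)
      rw [← hsq] at hle
      have hge : (μ.parts q : ℤ) ≤ (ν q).parts 0 := le_of_mul_le_mul_right hle (hap q)
      have h2 : ∀ i, i ≠ 0 → (ν q).parts i = 0 := by
        intro i hi
        by_cases hiN : i < N
        · have h3 : ∑ j ∈ {0, i}, ((ν q).parts j : ℤ)
              ≤ ∑ j ∈ Finset.range N, ((ν q).parts j : ℤ) := by
            refine Finset.sum_le_sum_of_subset_of_nonneg ?_ (fun _ _ _ => by positivity)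
            intro j hj
            simp only [Finset.mem_insert, Finset.mem_singleton] at hj
            rw [Finset.mem_range]
            omega
          rw [hν1 q, Finset.sum_pair (Ne.symm hi)] at h3
          omega
        · exact hN q i (not_lt.1 hiN)
      have h1 : (ν q).parts 0 = μ.parts q := by
        have h3 := hν1 q
        have hN0 : 0 < N := by
          by_contra hc
          have h4 := hN q 0 (by omega)
          have := hap q
          omega
        rw [Finset.sum_eq_single_of_mem 0 (Finset.mem_range.2 hN0)
          (fun i _ hi => by simp [h2 i hi])] at h3
        exact_mod_cast h3
      have hq := hap q
      intro s
      refine ⟨?_, fun i hi => ?_⟩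
      · have := hprop s q 0
        rw [h1, mul_comm] at this
        exact Nat.eq_of_mul_eq_mul_right (by exact_mod_cast hq) this
      · have := hprop s q i
        rw [h2 i hi, mul_zero] at this
        rcases Nat.mul_eq_zero.1 this with h | h
        · omega
        · exact h
  · intro hcase
    have hDz : ∀ p q, D p q = 0 := by
      intro p q
      rcases hcase with ⟨hR, hE⟩ | hE
      · have h0 : ∀ s : Fin r, μ.parts s = μ.parts 0 := fun s =>
          hR _ _ ((hpos _).2 s.2) ((hpos _).2 (lt_of_le_of_lt (Nat.zero_le _) s.2))
        simp only [hD, auxD, hE p q, h0 p, h0 q]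
        ring
      · have hc : ∀ s t : Fin r, ∑ i ∈ Finset.range N, ((ν s).parts i : ℤ) * (ν t).parts i
            = (μ.parts s : ℤ) * μ.parts t := by
          intro s t
          have h12 : (μ.parts s : ℤ) * μ.parts t = ((ν s).parts 0 : ℤ) * (ν t).parts 0 := by
            simp only [(hE s).1, (hE t).1]
          refine Eq.trans ?_ h12.symm
          refine Finset.sum_eq_single 0 (fun i _ hi => by simp [(hE s).2 i hi]) ?_
          intro h
          rw [hN s 0 (by simpa using h)]; simp
        simp only [hD, auxD, hc]
        ring
    have : ∑ p, ∑ q, D p q = 0 := by simp [hDz]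
    linarith
end

section
/- Fix integers g ≥ 0, k ≥ 1, n ≥ 1. Let 𝛍 = (μ¹,…,μᵏ) be a k-tuple of partitions of n with δ(𝛍) ≥ 0, and let 𝛎¹,…,𝛎ˢ be non-zero k-tuples, where 𝛎ᵖ = (ν^{1,p},…,ν^{k,p}) is a k-tuple of partitions of n_p ≥ 1, such that for each i = 1,…,k the partitions ν^{i,1},…,ν^{i,s} sum to μⁱ up to permutation of parts. Then Σ_{p=1}^s Δ(𝛎ᵖ) ≤ Δ(𝛍), and equality holds if and only if either s = 1 (in which case 𝛎¹ = 𝛍), or Δ(𝛍) = 0 and Δ(𝛎ᵖ) = 0 for every p. -/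
/-- `Δ(𝛒) = ½(2g−2+k)m² − ½ Σ_{i,j} (ρⁱⱼ)²` for a `k`-tuple `𝛒` of partitions of `m`. -/
noncomputable def DeltaStat (g k : ℕ) {m : ℕ} (ρ : Fin k → PartitionOf m) : ℚ :=
  (2 * (g : ℚ) - 2 + (k : ℚ)) * (m : ℚ) ^ 2 / 2
    - (∑ i, ∑ᶠ j, ((ρ i).parts j : ℚ) ^ 2) / 2

/-- `δ(𝛒) = (2g−2+k)m − Σ_i ρⁱ₁` for a `k`-tuple `𝛒` of partitions of `m`. -/
noncomputable def deltaStat (g k : ℕ) {m : ℕ} (ρ : Fin k → PartitionOf m) : ℚ :=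
  (2 * (g : ℚ) - 2 + (k : ℚ)) * (m : ℚ) - ∑ i, ((ρ i).parts 0 : ℚ)

/-- `ν¹,…,νˢ` sum to `μ` up to permutation of parts: there are rearrangements
`xᵖ` of the zero-padded part sequences of the `νᵖ` with `Σ_p xᵖᵢ = μᵢ` for all `i`. -/
def SumsToUpToPerm {s : ℕ} {m : Fin s → ℕ} {n : ℕ}
    (ν : ∀ p : Fin s, PartitionOf (m p)) (μ : PartitionOf n) : Prop :=
  ∃ x : Fin s → ℕ → ℕ,
    (∀ p, ∃ σ : Equiv.Perm ℕ, x p = (ν p).parts ∘ σ) ∧ ∀ i, ∑ p, x p i = μ.parts i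

theorem aux_le (f h : ℕ → ℕ) (hf : ∀ ⦃i j : ℕ⦄, i ≤ j → f j ≤ f i)
    (hh : ∀ ⦃i j : ℕ⦄, i ≤ j → h j ≤ h i) (σ : Equiv.Perm ℕ) (e : h = f ∘ σ) (i : ℕ) :
    h i ≤ f i := by
  have : ∃ l ≤ i, i ≤ σ l := by
    by_contra hc
    push Not at hc
    have h1 : (Finset.range (i+1)).image σ ⊆ Finset.range i := by
      intro y hy
      simp only [Finset.mem_image, Finset.mem_range] at hy ⊢
      obtain ⟨l, hl, rfl⟩ := hy
      exact hc l (by omega)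
    have h2 := Finset.card_le_card h1
    rw [Finset.card_image_of_injective _ σ.injective] at h2
    simp at h2
  obtain ⟨l, hl, hl2⟩ := this
  calc h i ≤ h l := hh hl
    _ = f (σ l) := by rw [e]; rfl
    _ ≤ f i := hf hl2

theorem aux_eq (f h : ℕ → ℕ) (hf : ∀ ⦃i j : ℕ⦄, i ≤ j → f j ≤ f i)
    (hh : ∀ ⦃i j : ℕ⦄, i ≤ j → h j ≤ h i) (σ : Equiv.Perm ℕ) (e : h = f ∘ σ) : f = h := by
  funext i
  apply le_antisymm
  · refine aux_le h f hh hf σ.symm ?_ i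
    rw [e]; funext j; simp
  · exact aux_le f h hf hh σ e i

theorem core_id (N : ℕ) (n a M : ℚ) (m x : ℕ → ℚ)
    (hm : ∑ j ∈ Finset.range N, m j = n) (hx : ∑ j ∈ Finset.range N, x j = a) :
    n ^ 2 * ∑ j ∈ Finset.range N, x j * (m j - x j) =
      M * a * (n - a) * n - ∑ j ∈ Finset.range N, (n * x j - a * m j) ^ 2
      - ∑ j ∈ Finset.range N, (M - m j) * ((n - a) ^ 2 * x j + a ^ 2 * (m j - x j)) := by
  have h : M * a * (n - a) * n =
      ∑ j ∈ Finset.range N, M * ((n - a) ^ 2 * x j + a ^ 2 * (m j - x j)) := by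
    rw [← Finset.mul_sum, Finset.sum_add_distrib, ← Finset.mul_sum, ← Finset.mul_sum,
      Finset.sum_sub_distrib, hm, hx]
    ring
  rw [h, Finset.mul_sum, ← Finset.sum_sub_distrib, ← Finset.sum_sub_distrib]
  apply Finset.sum_congr rfl
  intro j _
  ring

theorem core (k s N : ℕ) (c n : ℚ) (hn : 0 < n) (m : Fin k → ℕ → ℚ) (M : Fin k → ℚ)
    (a : Fin s → ℚ) (x : Fin s → Fin k → ℕ → ℚ) (ha : ∀ p, 0 < a p)
    (hx0 : ∀ p i j, 0 ≤ x p i j) (hxm : ∀ p i j, x p i j ≤ m i j)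
    (hmM : ∀ i j, m i j ≤ M i)
    (hm : ∀ i, ∑ j ∈ Finset.range N, m i j = n)
    (hx : ∀ p i, ∑ j ∈ Finset.range N, x p i j = a p)
    (hxs : ∀ i j, ∑ p, x p i j = m i j) (has : ∑ p, a p = n) (han : ∀ p, a p ≤ n)
    (hd : 0 ≤ c * n - ∑ i, M i) :
    ∑ p, (c * a p ^ 2 - ∑ i, ∑ j ∈ Finset.range N, x p i j ^ 2) ≤
      c * n ^ 2 - ∑ i, ∑ j ∈ Finset.range N, m i j ^ 2 ∧
    ((∀ p, a p < n) → 1 ≤ s → ∑ p, (c * a p ^ 2 - ∑ i, ∑ j ∈ Finset.range N, x p i j ^ 2) =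
      c * n ^ 2 - ∑ i, ∑ j ∈ Finset.range N, m i j ^ 2 →
      (c * n ^ 2 - ∑ i, ∑ j ∈ Finset.range N, m i j ^ 2 = 0 ∧
        ∀ p, c * a p ^ 2 - ∑ i, ∑ j ∈ Finset.range N, x p i j ^ 2 = 0)) := by
  have hQ : ∀ p i j, 0 ≤ (n * x p i j - a p * m i j) ^ 2 := fun p i j => sq_nonneg _
  have hR : ∀ p i j, 0 ≤ (M i - m i j) * ((n - a p) ^ 2 * x p i j + a p ^ 2 * (m i j - x p i j)) := by
    intro p i j
    have h1 := hmM i j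
    have h2 := hx0 p i j
    have h3 := hxm p i j
    exact mul_nonneg (by linarith) (add_nonneg (mul_nonneg (sq_nonneg _) h2)
      (mul_nonneg (sq_nonneg _) (by linarith)))
  have hE : ∀ p, 0 ≤ a p * (n - a p) * n * (c * n - ∑ i, M i) := by
    intro p
    have := ha p
    have := han p
    exact mul_nonneg (mul_nonneg (mul_nonneg (by linarith) (by linarith)) hn.le) hd
  have hQR0 : ∀ p i, 0 ≤ ∑ j ∈ Finset.range N, ((n * x p i j - a p * m i j) ^ 2 +
      (M i - m i j) * ((n - a p) ^ 2 * x p i j + a p ^ 2 * (m i j - x p i j))) := fun p i =>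
    Finset.sum_nonneg fun j _ => add_nonneg (hQ p i j) (hR p i j)
  have hG : ∀ p, 0 ≤ a p * (n - a p) * n * (c * n - ∑ i, M i) +
      ∑ i, ∑ j ∈ Finset.range N, ((n * x p i j - a p * m i j) ^ 2 +
      (M i - m i j) * ((n - a p) ^ 2 * x p i j + a p ^ 2 * (m i j - x p i j))) := fun p =>
    add_nonneg (hE p) (Finset.sum_nonneg fun i _ => hQR0 p i)
  have key : n ^ 2 * ((c * n ^ 2 - ∑ i, ∑ j ∈ Finset.range N, m i j ^ 2) -
      ∑ p, (c * a p ^ 2 - ∑ i, ∑ j ∈ Finset.range N, x p i j ^ 2)) =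
      ∑ p, (a p * (n - a p) * n * (c * n - ∑ i, M i) +
      ∑ i, ∑ j ∈ Finset.range N, ((n * x p i j - a p * m i j) ^ 2 +
      (M i - m i j) * ((n - a p) ^ 2 * x p i j + a p ^ 2 * (m i j - x p i j)))) := by
    have e1 : ∀ p, a p * (n - a p) * n * (c * n - ∑ i, M i) +
      ∑ i, ∑ j ∈ Finset.range N, ((n * x p i j - a p * m i j) ^ 2 +
      (M i - m i j) * ((n - a p) ^ 2 * x p i j + a p ^ 2 * (m i j - x p i j))) =
      n ^ 2 * (c * a p * (n - a p) - ∑ i, ∑ j ∈ Finset.range N, x p i j * (m i j - x p i j)) := by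
      intro p
      rw [mul_sub (n ^ 2), Finset.mul_sum]
      rw [Finset.sum_congr rfl fun i _ => core_id N n (a p) (M i) (m i) (x p i) (hm i) (hx p i)]
      simp_rw [Finset.sum_add_distrib, Finset.sum_sub_distrib, ← Finset.sum_mul]
      ring
    simp_rw [e1]
    rw [← Finset.mul_sum]
    congr 1
    have e2 : c * n ^ 2 = ∑ p, c * a p * n := by
      rw [← Finset.sum_mul, ← Finset.mul_sum, has]; ring
    have e3 : ∑ i, ∑ j ∈ Finset.range N, m i j ^ 2 =
        ∑ p, ∑ i, ∑ j ∈ Finset.range N, x p i j * m i j := by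
      symm
      rw [Finset.sum_comm]
      refine Finset.sum_congr rfl fun i _ => ?_
      rw [Finset.sum_comm]
      refine Finset.sum_congr rfl fun j _ => ?_
      rw [← Finset.sum_mul, hxs]; ring
    rw [e2, e3, ← Finset.sum_sub_distrib, ← Finset.sum_sub_distrib]
    refine Finset.sum_congr rfl fun p _ => ?_
    simp_rw [mul_sub, Finset.sum_sub_distrib, pow_two]
    ring
  have hn2 : 0 < n ^ 2 := by positivity
  refine ⟨?_, ?_⟩
  · have h0 := Finset.sum_nonneg fun p (_ : p ∈ Finset.univ) => hG p
    rw [← key] at h0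
    have := nonneg_of_mul_nonneg_right h0 hn2
    linarith
  · intro hlt hs1 heq
    rw [heq, sub_self, mul_zero] at key
    have hz := (Finset.sum_eq_zero_iff_of_nonneg (fun p _ => hG p)).1 key.symm
    have hz1 : ∀ p, a p * (n - a p) * n * (c * n - ∑ i, M i) = 0 := by
      intro p
      have h1 := hz p (Finset.mem_univ p)
      have h2 := hE p
      have h3 := Finset.sum_nonneg fun i (_ : i ∈ Finset.univ) => hQR0 p i
      linarith
    have hz2 : ∀ p i j, j ∈ Finset.range N → (n * x p i j - a p * m i j) ^ 2 +
      (M i - m i j) * ((n - a p) ^ 2 * x p i j + a p ^ 2 * (m i j - x p i j)) = 0 := by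
      intro p i j hj
      have h1 := hz p (Finset.mem_univ p)
      rw [hz1, zero_add] at h1
      have h2 := (Finset.sum_eq_zero_iff_of_nonneg (fun i _ => hQR0 p i)).1 h1 i (Finset.mem_univ i)
      exact (Finset.sum_eq_zero_iff_of_nonneg
        (fun j _ => add_nonneg (hQ p i j) (hR p i j))).1 h2 j hj
    have hxe : ∀ p i j, j ∈ Finset.range N → x p i j = a p / n * m i j := by
      intro p i j hj
      have h1 := hz2 p i j hj
      have h2 : (n * x p i j - a p * m i j) ^ 2 = 0 := by
        have := hQ p i j
        have := hR p i j
        linarith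
      have h3 := pow_eq_zero_iff (two_ne_zero) |>.1 h2
      field_simp
      linarith
    let p0 : Fin s := ⟨0, hs1⟩
    have hpos : 0 < a p0 * (n - a p0) := mul_pos (ha p0) (by linarith [hlt p0])
    have hδ : c * n - ∑ i, M i = 0 := by
      have := hz1 p0
      have h4 : a p0 * (n - a p0) * n ≠ 0 := (mul_pos hpos hn).ne'
      exact (mul_eq_zero.1 this).resolve_left h4
    have hmm : ∀ i j, j ∈ Finset.range N → m i j ^ 2 = M i * m i j := by
      intro i j hj
      have h1 := hz2 p0 i j hj
      have h2 := hQ p0 i j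
      have h3 := hR p0 i j
      have h4 : (M i - m i j) * ((n - a p0) ^ 2 * x p0 i j + a p0 ^ 2 * (m i j - x p0 i j)) = 0 := by
        linarith
      rw [hxe p0 i j hj] at h4
      have h5 : a p0 * (n - a p0) * ((M i - m i j) * m i j) = 0 := by
        rw [← h4]; field_simp; ring
      have h6 := (mul_eq_zero.1 h5).resolve_left hpos.ne'
      linarith
    have hms : ∑ i, ∑ j ∈ Finset.range N, m i j ^ 2 = n * ∑ i, M i := by
      rw [Finset.mul_sum]
      refine Finset.sum_congr rfl fun i _ => ?_
      rw [Finset.sum_congr rfl (hmm i), ← Finset.mul_sum, hm]; ring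
    refine ⟨?_, fun p => ?_⟩
    · rw [hms]
      linear_combination n * hδ
    · have : ∑ i, ∑ j ∈ Finset.range N, x p i j ^ 2 = (a p / n) ^ 2 * (n * ∑ i, M i) := by
        rw [← hms, Finset.mul_sum]
        refine Finset.sum_congr rfl fun i _ => ?_
        rw [Finset.mul_sum]
        refine Finset.sum_congr rfl fun j hj => ?_
        rw [hxe p i j hj]; ring
      rw [this]
      have h7 : ∑ i, M i = c * n := by linarith
      rw [h7]; field_simp; ring

/-- Proposition on `Δ`: if `δ(𝛍) ≥ 0` and, for each `i`, the partitions
`ν^{i,1},…,ν^{i,s}` sum to `μⁱ` up to permutation of parts, then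
`Σ_p Δ(𝛎ᵖ) ≤ Δ(𝛍)`, with equality iff `s = 1` (in which case `𝛎¹ = 𝛍`) or
`Δ(𝛍) = 0` and all `Δ(𝛎ᵖ) = 0`. -/
theorem stmt_5 (g k n : ℕ) (hk : 1 ≤ k) (hn : 1 ≤ n)
    (μ : Fin k → PartitionOf n) (hδ : 0 ≤ deltaStat g k μ)
    (s : ℕ) (hs : 1 ≤ s) (np : Fin s → ℕ) (hnp : ∀ p, 1 ≤ np p)
    (ν : ∀ p : Fin s, Fin k → PartitionOf (np p))
    (hsum : ∀ i, SumsToUpToPerm (fun p => ν p i) (μ i)) :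
    ∑ p, DeltaStat g k (ν p) ≤ DeltaStat g k μ ∧
    (∑ p, DeltaStat g k (ν p) = DeltaStat g k μ ↔
      s = 1 ∨ (DeltaStat g k μ = 0 ∧ ∀ p, DeltaStat g k (ν p) = 0)) ∧
    (s = 1 → ∀ p i, (ν p i).parts = (μ i).parts) := by
  choose x hσ hxs using hsum
  choose σ hσ using hσ
  have hz : ∀ i, ∃ N, ∀ j, N ≤ j → (μ i).parts j = 0 := fun i => (μ i).eventually_zero
  choose Nf hNf using hz
  obtain ⟨N, hN⟩ : ∃ N, ∀ i j, N ≤ j → (μ i).parts j = 0 :=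
    ⟨Finset.univ.sup Nf, fun i j hj =>
      hNf i j (le_trans (Finset.le_sup (Finset.mem_univ i)) hj)⟩
  have hle : ∀ p i j, x i p j ≤ (μ i).parts j := by
    intro p i j
    rw [← hxs i j]
    exact Finset.single_le_sum (f := fun p => x i p j) (fun _ _ => Nat.zero_le _) (Finset.mem_univ p)
  have hxN : ∀ p i j, N ≤ j → x i p j = 0 := fun p i j hj => by
    have := hle p i j
    rw [hN i j hj] at this
    omega
  have fs : ∀ f : ℕ → ℕ, (∀ j, N ≤ j → f j = 0) →
      ∑ᶠ j, f j = ∑ j ∈ Finset.range N, f j := by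
    intro f hf
    apply finsum_eq_sum_of_support_subset
    intro j hj
    by_contra hc
    simp at hc
    exact hj (hf j hc)
  have fsQ : ∀ f : ℕ → ℕ, (∀ j, N ≤ j → f j = 0) →
      ∑ᶠ j, (f j : ℚ) ^ 2 = ∑ j ∈ Finset.range N, (f j : ℚ) ^ 2 := by
    intro f hf
    apply finsum_eq_sum_of_support_subset
    intro j hj
    by_contra hc
    simp at hc
    exact hj (by simp [hf j hc])
  have hmu : ∀ i, ∑ j ∈ Finset.range N, (μ i).parts j = n := fun i => by
    rw [← fs _ (hN i), (μ i).sum_eq]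
  have hx1 : ∀ p i, ∑ j ∈ Finset.range N, x i p j = np p := fun p i => by
    rw [← fs _ (hxN p i), ← (ν p i).sum_eq, hσ i p]
    exact finsum_comp_equiv (σ i p) (f := (ν p i).parts)
  have hx2 : ∀ p i, ∑ᶠ j, ((ν p i).parts j : ℚ) ^ 2 =
      ∑ j ∈ Finset.range N, (x i p j : ℚ) ^ 2 := fun p i => by
    rw [← fsQ _ (hxN p i), hσ i p]
    exact (finsum_comp_equiv (σ i p) (f := fun j => ((ν p i).parts j : ℚ) ^ 2)).symm
  have hnps : ∑ p, np p = n := by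
    let i0 : Fin k := ⟨0, hk⟩
    rw [← hmu i0]
    simp_rw [← hxs i0, ← hx1 _ i0]
    rw [Finset.sum_comm]
  have hD : ∀ p, DeltaStat g k (ν p) = ((2 * (g : ℚ) - 2 + (k : ℚ)) * (np p : ℚ) ^ 2 -
      ∑ i, ∑ j ∈ Finset.range N, (x i p j : ℚ) ^ 2) / 2 := fun p => by
    unfold DeltaStat
    simp_rw [hx2]
    ring
  have hDm : DeltaStat g k μ = ((2 * (g : ℚ) - 2 + (k : ℚ)) * (n : ℚ) ^ 2 -
      ∑ i, ∑ j ∈ Finset.range N, ((μ i).parts j : ℚ) ^ 2) / 2 := by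
    unfold DeltaStat
    simp_rw [fun i => fsQ _ (hN i)]
    ring
  have hnple : ∀ p, np p ≤ n := fun p => by
    rw [← hnps]
    exact Finset.single_le_sum (fun _ _ => Nat.zero_le _) (Finset.mem_univ p)
  obtain ⟨c1, c2⟩ := core k s N (2 * (g : ℚ) - 2 + (k : ℚ)) n (by exact_mod_cast hn)
    (fun i j => ((μ i).parts j : ℚ)) (fun i => ((μ i).parts 0 : ℚ)) (fun p => (np p : ℚ))
    (fun p i j => (x i p j : ℚ)) (fun p => by exact_mod_cast hnp p)
    (fun p i j => by positivity) (fun p i j => by exact_mod_cast hle p i j)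
    (fun i j => by exact_mod_cast (μ i).antitone (Nat.zero_le j))
    (fun i => by exact_mod_cast hmu i) (fun p i => by exact_mod_cast hx1 p i)
    (fun i j => by exact_mod_cast hxs i j) (by exact_mod_cast hnps)
    (fun p => by exact_mod_cast hnple p) hδ
  have hpart : s = 1 → ∀ p i, (ν p i).parts = (μ i).parts := by
    rintro rfl p i
    refine aux_eq _ _ (ν p i).antitone (μ i).antitone (σ i p) ?_
    funext j
    rw [← hxs i j, ← hσ i p, Fin.sum_univ_one, Subsingleton.elim p 0]
  have hS : ∑ p, DeltaStat g k (ν p) = (∑ p, ((2 * (g : ℚ) - 2 + (k : ℚ)) * (np p : ℚ) ^ 2 -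
      ∑ i, ∑ j ∈ Finset.range N, (x i p j : ℚ) ^ 2)) / 2 := by
    simp_rw [hD]
    rw [Finset.sum_div]
  refine ⟨?_, ⟨fun heq => ?_, ?_⟩, hpart⟩
  · rw [hS, hDm]
    linarith
  · by_cases h1 : s = 1
    · exact Or.inl h1
    · right
      have hlt : ∀ p, (np p : ℚ) < n := by
        intro p
        have : ∃ q : Fin s, q ≠ p := by
          have : Nontrivial (Fin s) := Fin.nontrivial_iff_two_le.2 (by omega)
          exact exists_ne p
        obtain ⟨q, hq⟩ := this
        have h2 : np p + np q ≤ n := by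
          rw [← hnps, ← Finset.sum_pair hq.symm]
          exact Finset.sum_le_sum_of_subset (Finset.subset_univ _)
        have := hnp q
        exact_mod_cast (by omega : np p < n)
      rw [hS, hDm] at heq
      obtain ⟨d1, d2⟩ := c2 hlt hs (by linarith)
      refine ⟨?_, fun p => ?_⟩
      · rw [hDm, d1, zero_div]
      · rw [hD, d2, zero_div]
  · rintro (h1 | ⟨h1, h2⟩)
    · have hp := hpart h1
      subst h1
      rw [Fin.sum_univ_one] at hnps ⊢
      unfold DeltaStat
      simp_rw [hp, hnps]
    · rw [h1]
      exact Finset.sum_eq_zero fun p _ => h2 p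
end
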